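/- Let ρ be a binary constant-length substitution of length L ≥ 2 with Fourier matrix B(k), and suppose the polynomials Q and R are not equal. Then for Lebesgue-almost every k ∈ ℝ, lim_{n→∞} (1/n)·Σ_{m=0}^{n−1} log|det B(L^m k)| = m(Q−R), the logarithmic Mahler measure of Q−R. -/

import Mathlib

open Filter Polynomial

noncomputable section

/-- `e k = exp(2πik)`, the point on the unit circle with angle `2πk`. -/
def e (k : ℝ) : ℂ := Complex.exp (2 * Real.pi * Complex.I * k)

/-- Coincidence positions of type `a` (letter `a` encoded as `0`, `b` as `1`). -/
def Ca {L : ℕ} (wa wb : Fin L → Fin 2) : Finset (Fin L) :=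
  Finset.univ.filter fun i => wa i = 0 ∧ wb i = 0

/-- Coincidence positions of type `b`. -/
def Cb {L : ℕ} (wa wb : Fin L → Fin 2) : Finset (Fin L) :=
  Finset.univ.filter fun i => wa i = 1 ∧ wb i = 1

/-- Bijective positions where `(w_a)_i = a` and `(w_b)_i = b`. -/
def Pa {L : ℕ} (wa wb : Fin L → Fin 2) : Finset (Fin L) :=
  Finset.univ.filter fun i => wa i = 0 ∧ wb i = 1

/-- Bijective positions where `(w_a)_i = b` and `(w_b)_i = a`. -/
def Pb {L : ℕ} (wa wb : Fin L → Fin 2) : Finset (Fin L) :=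
  Finset.univ.filter fun i => wa i = 1 ∧ wb i = 0

/-- The polynomial `∑_{z ∈ S} X^z` associated with a set of positions. -/
def posPoly {L : ℕ} (S : Finset (Fin L)) : Polynomial ℂ :=
  ∑ z ∈ S, Polynomial.X ^ (z : ℕ)

/-- The Fourier matrix `B(k)` of the substitution determined by `wa, wb`. -/
def FourierB {L : ℕ} (wa wb : Fin L → Fin 2) (k : ℝ) : Matrix (Fin 2) (Fin 2) ℂ :=
  !![(posPoly (Ca wa wb) + posPoly (Pa wa wb)).eval (e k),
     (posPoly (Ca wa wb) + posPoly (Pb wa wb)).eval (e k);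
     (posPoly (Cb wa wb) + posPoly (Pb wa wb)).eval (e k),
     (posPoly (Cb wa wb) + posPoly (Pa wa wb)).eval (e k)]

/-- The logarithmic Mahler measure `m(f) = ∫₀¹ log |f(e^{2πik})| dk`. -/
def logMahler (f : Polynomial ℂ) : ℝ :=
  ∫ k in (0:ℝ)..1, Real.log ‖f.eval (e k)‖

/-- The operator norm of a matrix, induced by the Euclidean norm on `ℂ²`. -/
def opNorm (M : Matrix (Fin 2) (Fin 2) ℂ) : ℝ :=
  ‖Matrix.toEuclideanCLM (𝕜 := ℂ) M‖

/-- The (forward) matrix product `B(k) · B(Lk) ⋯ B(L^{n-1}k)` of the outward cocycle. -/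
def cocycleProd {L : ℕ} (wa wb : Fin L → Fin 2) (k : ℝ) (n : ℕ) :
    Matrix (Fin 2) (Fin 2) ℂ :=
  (((List.range n).map fun m => FourierB wa wb ((L : ℝ) ^ m * k))).prod

open MeasureTheory

/-- Running maximum `max (S_1, …, S_{n+1})` of Birkhoff sums. -/
noncomputable def maxSum {α : Type*} (T : α → α) (f : α → ℝ) : ℕ → α → ℝ
  | 0 => f
  | n + 1 => fun x => f x + max 0 (maxSum T f n (T x))

lemma birkhoffSum_le_maxSum {α : Type*} (T : α → α) (f : α → ℝ) (n : ℕ) (x : α) :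
    birkhoffSum T f (n + 1) x ≤ maxSum T f n x := by
  induction n generalizing x with
  | zero => simp [maxSum]
  | succ n ih =>
    rw [birkhoffSum_succ']
    simp only [maxSum]
    have := ih (T x)
    have := le_max_right 0 (maxSum T f n (T x))
    linarith

lemma maxSum_mono {α : Type*} (T : α → α) (f : α → ℝ) (n : ℕ) (x : α) :
    maxSum T f n x ≤ maxSum T f (n + 1) x := by
  induction n generalizing x with
  | zero => simp [maxSum]
  | succ n ih =>
    simp only [maxSum]
    have := ih (T x)
    simp only [maxSum] at this
    gcongr

lemma maxSum_integrable {α : Type*} [MeasurableSpace α] {μ : Measure α} {T : α → α}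
    (hT : MeasurePreserving T μ μ) {f : α → ℝ} (hf : Integrable f μ) (n : ℕ) :
    Integrable (maxSum T f n) μ := by
  induction n with
  | zero => exact hf
  | succ n ih =>
    have h : Integrable (fun x => max 0 (maxSum T f n x)) μ := by
      have := ih.pos_part
      simpa [max_comm] using this
    exact hf.add (hT.integrable_comp_of_integrable h)

lemma maxSum_measurable {α : Type*} [MeasurableSpace α] {T : α → α}
    (hT : Measurable T) {f : α → ℝ} (hf : Measurable f) (n : ℕ) :
    Measurable (maxSum T f n) := by
  induction n with
  | zero => exact hf
  | succ n ih =>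
    exact hf.add (measurable_const.max (ih.comp hT))

lemma bddAbove_maxSum_iff {α : Type*} (T : α → α) (f : α → ℝ) (x : α) :
    (∃ C : ℕ, ∀ n, maxSum T f n (T x) ≤ C) ↔ (∃ C : ℕ, ∀ n, maxSum T f n x ≤ C) := by
  constructor
  · rintro ⟨C, hC⟩
    obtain ⟨D, hD⟩ := exists_nat_ge (f x + C)
    refine ⟨D, fun n => (maxSum_mono T f n x).trans ?_⟩
    simp only [maxSum]
    have : max 0 (maxSum T f n (T x)) ≤ C := max_le (by positivity) (hC n)
    linarith
  · rintro ⟨C, hC⟩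
    obtain ⟨D, hD⟩ := exists_nat_ge (C - f x)
    refine ⟨D, fun n => ?_⟩
    have h := hC (n + 1)
    simp only [maxSum] at h
    have := le_max_right 0 (maxSum T f n (T x))
    linarith

lemma ae_bdd_of_integral_neg {α : Type*} [MeasurableSpace α] {μ : Measure α}
    [IsProbabilityMeasure μ] {T : α → α}
    (hT : Ergodic T μ) {f : α → ℝ} (hfm : Measurable f) (hf : Integrable f μ)
    (hneg : ∫ x, f x ∂μ < 0) :
    ∀ᵐ x ∂μ, ∃ C : ℕ, ∀ n, maxSum T f n x ≤ C := by
  set A : Set α := {x | ∃ C : ℕ, ∀ n, maxSum T f n x ≤ C} with hA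
  have hAm : MeasurableSet A := by
    have : A = ⋃ C : ℕ, ⋂ n, {x | maxSum T f n x ≤ C} := by
      ext x; simp [hA]
    rw [this]
    exact MeasurableSet.iUnion fun C => MeasurableSet.iInter fun n =>
      measurableSet_le (maxSum_measurable hT.measurable hfm n) measurable_const
  have hAi : T ⁻¹' A = A := by
    ext x
    exact bddAbove_maxSum_iff T f x
  rcases hT.toPreErgodic.ae_mem_or_ae_notMem hAm hAi with h | h
  · exact h
  exfalso
  have hTp := hT.toMeasurePreserving
  have key : ∀ n, 0 ≤ ∫ x, (f x - min 0 (maxSum T f n (T x))) ∂μ := by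
    intro n
    have e1 : ∀ x, f x - min 0 (maxSum T f n (T x)) =
        maxSum T f (n + 1) x - maxSum T f n (T x) := by
      intro x
      simp only [maxSum]
      have := min_add_max 0 (maxSum T f n (T x))
      linarith
    simp_rw [e1]
    have hi := maxSum_integrable hTp hf
    have hc : Integrable (fun x => maxSum T f n (T x)) μ :=
      hTp.integrable_comp_of_integrable (hi n)
    rw [integral_sub (hi (n+1)) hc]
    have : ∫ x, maxSum T f n (T x) ∂μ = ∫ x, maxSum T f n x ∂μ := by
      have h2 := integral_map (μ := μ) (φ := T) hT.measurable.aemeasurable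
        (f := maxSum T f n) (by rw [hTp.map_eq]; exact (hi n).aestronglyMeasurable)
      rw [hTp.map_eq] at h2
      exact h2.symm
    rw [this, sub_nonneg]
    exact integral_mono (hi n) (hi (n+1)) (maxSum_mono T f n)
  have lim : Tendsto (fun n => ∫ x, (f x - min 0 (maxSum T f n (T x))) ∂μ) atTop
      (nhds (∫ x, f x ∂μ)) := by
    refine tendsto_integral_of_dominated_convergence (fun x => |f x| + |f (T x)|) ?_ ?_ ?_ ?_
    · intro n
      exact (hfm.sub (measurable_const.min
        ((maxSum_measurable hT.measurable hfm n).comp hT.measurable))).aestronglyMeasurable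
    · exact hf.abs.add (hTp.integrable_comp_of_integrable hf.abs)
    · intro n
      refine ae_of_all _ fun x => ?_
      have hm : f (T x) ≤ maxSum T f n (T x) :=
        monotone_nat_of_le_succ (f := fun n => maxSum T f n (T x))
          (fun n => maxSum_mono T f n (T x)) (Nat.zero_le n)
      have h1 : |min 0 (maxSum T f n (T x))| ≤ |f (T x)| := by
        rw [abs_of_nonpos (min_le_left _ _)]
        rcases le_total 0 (maxSum T f n (T x)) with h | h
        · rw [min_eq_left h]; simp
        · rw [min_eq_right h]
          have := neg_abs_le (f (T x))
          linarith
      rw [Real.norm_eq_abs]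
      exact (abs_sub _ _).trans (by linarith)
    · filter_upwards [h] with x hx
      have hx' : T x ∉ A := fun hh => hx (by rw [← hAi]; exact hh)
      have : ∃ n, 0 ≤ maxSum T f n (T x) := by
        by_contra hcon
        push Not at hcon
        exact hx' ⟨0, fun n => by simpa using (hcon n).le⟩
      obtain ⟨N, hN⟩ := this
      refine tendsto_const_nhds.congr' ?_
      filter_upwards [eventually_ge_atTop N] with n hn
      have hm : maxSum T f N (T x) ≤ maxSum T f n (T x) :=
        monotone_nat_of_le_succ (f := fun n => maxSum T f n (T x))
          (fun n => maxSum_mono T f n (T x)) hn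
      rw [min_eq_left (hN.trans hm), sub_zero]
  have := ge_of_tendsto' lim key
  linarith

lemma ae_eventually_lt {α : Type*} [MeasurableSpace α] {μ : Measure α}
    [IsProbabilityMeasure μ] {T : α → α}
    (hT : Ergodic T μ) {f : α → ℝ} (hfm : Measurable f) (hf : Integrable f μ)
    (a : ℝ) (ha : ∫ x, f x ∂μ < a) :
    ∀ᵐ x ∂μ, ∀ᶠ n : ℕ in atTop, (1 / n : ℝ) * birkhoffSum T f n x < a := by
  obtain ⟨b, hb1, hb2⟩ := exists_between ha
  have hg := ae_bdd_of_integral_neg hT (f := fun x => f x - b) (hfm.sub_const b)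
    (hf.sub (integrable_const b)) (by
      rw [integral_sub hf (integrable_const b)]; simp; linarith)
  filter_upwards [hg] with x ⟨C, hC⟩
  obtain ⟨N, hN⟩ := exists_nat_gt (C / (a - b))
  filter_upwards [eventually_ge_atTop (N + 1)] with n hn
  obtain ⟨m, rfl⟩ : ∃ m, n = m + 1 := ⟨n - 1, by omega⟩
  have h1 := (birkhoffSum_le_maxSum T (fun x => f x - b) m x).trans (hC m)
  have h2 : birkhoffSum T (fun x => f x - b) (m + 1) x
      = birkhoffSum T f (m + 1) x - ((m + 1 : ℕ) : ℝ) * b := by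
    simp [birkhoffSum, Finset.sum_sub_distrib]
  rw [h2] at h1
  have hpos : (0 : ℝ) < ((m + 1 : ℕ) : ℝ) := by positivity
  rw [one_div, inv_mul_lt_iff₀ hpos]
  have hNm : (N : ℝ) < ((m + 1 : ℕ) : ℝ) := by exact_mod_cast (by omega : N < m + 1)
  rw [div_lt_iff₀ (by linarith)] at hN
  nlinarith

theorem birkhoff_ergodic {α : Type*} [MeasurableSpace α] {μ : Measure α}
    [IsProbabilityMeasure μ] {T : α → α}
    (hT : Ergodic T μ) {f : α → ℝ} (hfm : Measurable f) (hf : Integrable f μ) :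
    ∀ᵐ x ∂μ, Tendsto (fun n : ℕ => (1 / n : ℝ) * birkhoffSum T f n x) atTop
      (nhds (∫ x, f x ∂μ)) := by
  have h1 : ∀ᵐ x ∂μ, ∀ j : ℕ, ∀ᶠ n : ℕ in atTop,
      (1 / n : ℝ) * birkhoffSum T f n x < ∫ x, f x ∂μ + 1 / ((j : ℝ) + 1) := by
    rw [ae_all_iff]
    intro j
    exact ae_eventually_lt hT hfm hf _ (by have : 0 < 1 / ((j : ℝ) + 1) := by positivity
                                           linarith)
  have h2 : ∀ᵐ x ∂μ, ∀ j : ℕ, ∀ᶠ n : ℕ in atTop,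
      (1 / n : ℝ) * birkhoffSum T (-f) n x < - ∫ x, f x ∂μ + 1 / ((j : ℝ) + 1) := by
    rw [ae_all_iff]
    intro j
    refine ae_eventually_lt hT hfm.neg hf.neg _ ?_
    have : 0 < 1 / ((j : ℝ) + 1) := by positivity
    simp only [Pi.neg_apply, integral_neg]
    linarith
  filter_upwards [h1, h2] with x hx1 hx2
  rw [Metric.tendsto_nhds]
  intro ε hε
  obtain ⟨j, hj⟩ := exists_nat_one_div_lt hε
  filter_upwards [hx1 j, hx2 j] with n h3 h4
  rw [birkhoffSum_neg] at h4
  rw [Real.dist_eq, abs_lt]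
  constructor <;> linarith

lemma e_eq_toCircle (k : ℝ) : e k = (AddCircle.toCircle (k : UnitAddCircle) : ℂ) := by
  rw [AddCircle.toCircle_apply_mk, Circle.coe_exp, e]
  congr 1
  push_cast
  ring

lemma e_eq_circleMap (k : ℝ) : e k = circleMap 0 1 (2 * Real.pi * k) := by
  simp only [e, circleMap]
  push_cast
  rw [zero_add, one_mul]
  congr 1
  ring

lemma logMahler_eq (p : Polynomial ℂ) : logMahler p = p.logMahlerMeasure := by
  rw [logMahler, logMahlerMeasure_def, Real.circleAverage_def]
  simp_rw [e_eq_circleMap]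
  rw [intervalIntegral.integral_comp_mul_left
    (fun x => Real.log ‖p.eval (circleMap 0 1 x)‖) (by positivity)]
  simp

lemma intervalIntegrable_log (p : Polynomial ℂ) :
    IntervalIntegrable (fun k => Real.log ‖p.eval (e k)‖) volume 0 1 := by
  have h := (intervalIntegrable_mahlerMeasure p).comp_mul_left (c := 2 * Real.pi)
  simp_rw [e_eq_circleMap]
  simpa [div_self, Real.pi_ne_zero] using h

/-- The function `log |p|` on the circle. -/
def logNorm (p : Polynomial ℂ) (x : UnitAddCircle) : ℝ :=
  Real.log ‖p.eval (AddCircle.toCircle x : ℂ)‖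

lemma logNorm_measurable (p : Polynomial ℂ) : Measurable (logNorm p) := by
  have h : Continuous fun x : UnitAddCircle => p.eval (AddCircle.toCircle x : ℂ) :=
    p.continuous.comp (continuous_subtype_val.comp AddCircle.continuous_toCircle)
  exact Real.measurable_log.comp h.norm.measurable

lemma logNorm_integrable (p : Polynomial ℂ) : Integrable (logNorm p) volume := by
  have h := intervalIntegrable_log p
  rw [intervalIntegrable_iff_integrableOn_Ioc_of_le zero_le_one] at h
  have hm := UnitAddCircle.measurePreserving_mk 0
  rw [zero_add] at hm
  rw [← hm.integrable_comp (logNorm_measurable p).aestronglyMeasurable]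
  refine h.congr (ae_of_all _ fun k => ?_)
  simp [logNorm, e_eq_toCircle]

lemma logNorm_integral (p : Polynomial ℂ) : ∫ x, logNorm p x = logMahler p := by
  rw [← UnitAddCircle.intervalIntegral_preimage 0, zero_add, logMahler]
  simp [logNorm, e_eq_toCircle]

lemma ae_of_circle {P : UnitAddCircle → Prop} (h : ∀ᵐ x, P x) :
    ∀ᵐ k : ℝ, P (k : UnitAddCircle) := by
  have h1 : ∀ n : ℤ, ∀ᵐ k : ℝ ∂(volume.restrict (Set.Ioc (n : ℝ) (n + 1))),
      P (k : UnitAddCircle) := fun n =>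
    (UnitAddCircle.measurePreserving_mk (n : ℝ)).quasiMeasurePreserving.ae h
  have h2 := (ae_restrict_iUnion_iff (μ := (volume : Measure ℝ))
    (fun n : ℤ => Set.Ioc (n : ℝ) (n + 1)) (fun k : ℝ => P (k : UnitAddCircle))).mpr h1
  rwa [iUnion_Ioc_intCast, Measure.restrict_univ] at h2

lemma ae_poly {L : ℕ} (hL : 2 ≤ L) (p : Polynomial ℂ) :
    ∀ᵐ k : ℝ, Tendsto (fun n : ℕ => (1 / n : ℝ) *
        ∑ m ∈ Finset.range n, Real.log ‖p.eval (e ((L : ℝ) ^ m * k))‖)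
      atTop (nhds (logMahler p)) := by
  have : IsProbabilityMeasure (volume : Measure (AddCircle (1 : ℝ))) :=
    ⟨by rw [AddCircle.measure_univ]; simp⟩
  have h := birkhoff_ergodic (AddCircle.ergodic_nsmul (T := 1) (n := L) (by omega))
    (logNorm_measurable p) (logNorm_integrable p)
  rw [logNorm_integral] at h
  filter_upwards [ae_of_circle h] with k hk
  refine hk.congr fun n => ?_
  congr 1
  refine Finset.sum_congr rfl fun m _ => ?_
  rw [logNorm, e_eq_toCircle]
  congr 5
  rw [smul_iterate_apply, ← AddCircle.coe_nsmul]
  simp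

lemma posPoly_sum {L : ℕ} (wa wb : Fin L → Fin 2) :
    posPoly (Ca wa wb) + posPoly (Cb wa wb) + posPoly (Pa wa wb) + posPoly (Pb wa wb)
      = ∑ i ∈ Finset.range L, X ^ i := by
  rw [← Fin.sum_univ_eq_sum_range (fun i => (X : Polynomial ℂ) ^ i)]
  simp only [posPoly, Ca, Cb, Pa, Pb, Finset.sum_filter, ← Finset.sum_add_distrib]
  refine Finset.sum_congr rfl fun i _ => ?_
  generalize wa i = s
  generalize wb i = t
  fin_cases s <;> fin_cases t <;> simp

lemma det_FourierB {L : ℕ} (wa wb : Fin L → Fin 2) (k : ℝ) :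
    (FourierB wa wb k).det = ((posPoly (Pa wa wb) - posPoly (Pb wa wb)) *
      ∑ i ∈ Finset.range L, X ^ i : Polynomial ℂ).eval (e k) := by
  rw [← posPoly_sum wa wb, FourierB, Matrix.det_fin_two_of]
  simp only [eval_add, eval_mul, eval_sub]
  ring

lemma logMahler_mul_geom {L : ℕ} (hL : L ≠ 0) {p : Polynomial ℂ} (hp : p ≠ 0) :
    logMahler (p * ∑ i ∈ Finset.range L, X ^ i) = logMahler p := by
  have h1 : (∑ i ∈ Finset.range L, X ^ i : Polynomial ℂ) * (X - C 1) = X ^ L - C 1 := by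
    simpa using geom_sum_mul (X : Polynomial ℂ) L
  have h2 : (X ^ L - C 1 : Polynomial ℂ) ≠ 0 := X_pow_sub_C_ne_zero (Nat.pos_of_ne_zero hL) 1
  have h3 : (∑ i ∈ Finset.range L, X ^ i : Polynomial ℂ) ≠ 0 := by
    intro h
    rw [h, zero_mul] at h1
    exact h2 h1.symm
  have h4 : (∑ i ∈ Finset.range L, X ^ i : Polynomial ℂ).logMahlerMeasure = 0 := by
    have h5 := logMahlerMeasure_mul_eq_add_logMahlerMeasure (h1 ▸ h2)
    rw [logMahlerMeasure_X_sub_C] at h5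
    simp only [norm_one, Real.posLog_one, add_zero] at h5
    rw [← h5, h1, logMahlerMeasure_eq_log_leadingCoeff_add_sum_log_roots,
      leadingCoeff_X_pow_sub_C (Nat.pos_of_ne_zero hL)]
    simp only [norm_one, Real.log_one, zero_add]
    apply Multiset.sum_eq_zero
    intro y hy
    obtain ⟨z, hz, rfl⟩ := Multiset.mem_map.mp hy
    have hz1 : z ^ L = 1 := by
      have := (mem_roots h2).mp hz
      simpa [IsRoot, sub_eq_zero] using this
    rw [Complex.norm_eq_one_of_pow_eq_one hz1 hL, Real.posLog_one]
  rw [logMahler_eq, logMahler_eq,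
    logMahlerMeasure_mul_eq_add_logMahlerMeasure (mul_ne_zero hp h3), h4, add_zero]

/-- For a binary constant-length substitution of length `L ≥ 2` with `Q ≠ R`,
for Lebesgue-a.e. `k ∈ ℝ` the Birkhoff-type averages of `log |det B(L^m k)|` converge to the
logarithmic Mahler measure `m(Q - R)`. -/
theorem binary_substitution_det_Birkhoff_average
    (L : ℕ) (hL : 2 ≤ L) (wa wb : Fin L → Fin 2)
    (hQR : posPoly (Pa wa wb) ≠ posPoly (Pb wa wb)) :
    ∀ᵐ k : ℝ,
      Tendsto (fun n : ℕ => (1 / n : ℝ) *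
          ∑ m ∈ Finset.range n, Real.log ‖(FourierB wa wb ((L : ℝ) ^ m * k)).det‖)
        atTop (nhds (logMahler (posPoly (Pa wa wb) - posPoly (Pb wa wb)))) := by
  have hL0 : L ≠ 0 := by omega
  simp_rw [det_FourierB]
  have hne : posPoly (Pa wa wb) - posPoly (Pb wa wb) ≠ 0 := sub_ne_zero.mpr hQR
  have h := ae_poly (L := L) hL
    ((posPoly (Pa wa wb) - posPoly (Pb wa wb)) * ∑ i ∈ Finset.range L, X ^ i)
  rwa [logMahler_mul_geom hL0 hne] at h
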